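/- Let Ω be a finite probability space, let S, Q : Ω → {0,1}ⁿ be random variables on the set of binary strings of length n (with the Hamming distance d), and let 0 < d_min ≤ n. Then the probability that Q lands within Hamming distance less than d_min of S satisfies P[d(Q, S) < d_min] ≤ |B| · 2^{−H̃∞(S | Q)}, where |B| = Σ_{k=0}^{d_min−1} C(n, k) is the cardinality of a Hamming ball of radius d_min (i.e., the set of strings at distance < d_min from a fixed string). -/

import Mathlib

open Finset Real

/-- Probability of an event `E` under the weight function `p` on a finite sample space. -/
noncomputable def pr {Ω : Type*} [Fintype Ω] (p : Ω → ℝ) (E : Set Ω) : ℝ :=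
  ∑ ω, E.indicator p ω

/-- `P[X = x]`. -/
noncomputable def prEq {Ω 𝒳 : Type*} [Fintype Ω] (p : Ω → ℝ) (X : Ω → 𝒳) (x : 𝒳) : ℝ :=
  pr p {ω | X ω = x}

/-- `P[X = x | Y = y]`, taken to be `0` when `P[Y = y] = 0`. -/
noncomputable def condProb {Ω 𝒳 𝒴 : Type*} [Fintype Ω]
    (p : Ω → ℝ) (X : Ω → 𝒳) (x : 𝒳) (Y : Ω → 𝒴) (y : 𝒴) : ℝ :=
  if prEq p Y y = 0 then 0 else pr p {ω | X ω = x ∧ Y ω = y} / prEq p Y y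

/-- Average min-entropy `H̃∞(X | Y)`. -/
noncomputable def avgMinEntropy {Ω 𝒳 𝒴 : Type*} [Fintype Ω]
    [Fintype 𝒳] [Nonempty 𝒳] [Fintype 𝒴]
    (p : Ω → ℝ) (X : Ω → 𝒳) (Y : Ω → 𝒴) : ℝ :=
  - Real.logb 2 (∑ y : 𝒴, prEq p Y y *
      (Finset.univ.sup' Finset.univ_nonempty fun x : 𝒳 => condProb p X x Y y))

/-- Min-entropy `H∞(X)`. -/
noncomputable def minEntropy {Ω 𝒳 : Type*} [Fintype Ω] [Fintype 𝒳] [Nonempty 𝒳]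
    (p : Ω → ℝ) (X : Ω → 𝒳) : ℝ :=
  - Real.logb 2 (Finset.univ.sup' Finset.univ_nonempty fun x : 𝒳 => prEq p X x)

/-! If the adversary names a list of at most `N` candidates for `X` after seeing `Y = y`, each
candidate is correct with joint probability at most `P[Y = y] · max_x P[X = x | Y = y]`, and summing
over `y` bounds the success probability by `N · 2^{-H̃∞(X | Y)}`. Landing close to `S` is the case
where the list is the Hamming ball around the observed `Q`. -/

section HammingBall

variable {ι : Type*} [Fintype ι] [DecidableEq ι]

theorem card_filter_filter_ne_eq {β : ι → Type*} [∀ i, Fintype (β i)]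
    [∀ i, DecidableEq (β i)] (y : ∀ i, β i) (s : Finset ι) :
    #{x : ∀ i, β i | ({i | y i ≠ x i} : Finset ι) = s} = ∏ i ∈ s, (Fintype.card (β i) - 1) := by
  have fiber_eq : ({x : ∀ i, β i | ({i | y i ≠ x i} : Finset ι) = s} : Finset _) =
      Fintype.piFinset fun i => if i ∈ s then univ.erase (y i) else {y i} := by
    ext x
    simp only [mem_filter_univ, Finset.ext_iff, Fintype.mem_piFinset]
    refine forall_congr' fun i => ?_
    split_ifs with hi <;> simp [hi, eq_comm]
  have card_choices (i : ι) : #(if i ∈ s then univ.erase (y i) else {y i}) =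
      if i ∈ s then Fintype.card (β i) - 1 else 1 := by
    split_ifs <;> simp [card_erase_of_mem]
  rw [fiber_eq, Fintype.card_piFinset, prod_congr rfl fun i _ => card_choices i,
    prod_ite_mem, univ_inter]

variable {α : Type*} [Fintype α] [DecidableEq α]

theorem card_filter_hammingDist_eq (y : ι → α) (k : ℕ) :
    #{x : ι → α | hammingDist y x = k} =
      (Fintype.card ι).choose k * (Fintype.card α - 1) ^ k := by
  have diffSet_mem : ∀ x ∈ ({x | hammingDist y x = k} : Finset (ι → α)),
      ({i | y i ≠ x i} : Finset ι) ∈ powersetCard k univ := by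
    simp [hammingDist]
  rw [card_eq_sum_card_fiberwise diffSet_mem, ← card_univ (α := ι), ← card_powersetCard,
    ← smul_eq_mul]
  refine sum_eq_card_nsmul fun s hs => ?_
  have card_s : #s = k := (mem_powersetCard.mp hs).2
  have fiber_eq : ({x ∈ ({x | hammingDist y x = k} : Finset (ι → α)) |
      ({i | y i ≠ x i} : Finset ι) = s} : Finset _) =
      ({x | ({i | y i ≠ x i} : Finset ι) = s} : Finset (ι → α)) := by
    rw [filter_filter]
    refine filter_congr fun x _ => and_iff_right_of_imp fun hx => ?_
    rw [hammingDist, hx, card_s]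
  rw [fiber_eq, card_filter_filter_ne_eq, prod_const, card_s]

theorem card_filter_hammingDist_lt (y : ι → α) (d : ℕ) :
    #{x : ι → α | hammingDist y x < d} =
      ∑ k ∈ range d, (Fintype.card ι).choose k * (Fintype.card α - 1) ^ k := by
  simp_rw [← card_filter_hammingDist_eq y, card_eq_sum_ones, sum_fiberwise_eq_sum_filter, mem_range]

end HammingBall

section Probability

variable {Ω 𝒳 𝒴 : Type*} [Fintype Ω] {p : Ω → ℝ}

theorem pr_nonneg (hp : ∀ ω, 0 ≤ p ω) (E : Set Ω) : 0 ≤ pr p E :=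
  sum_nonneg fun ω _ => Set.indicator_nonneg (fun ω _ => hp ω) ω

theorem pr_mono (hp : ∀ ω, 0 ≤ p ω) {E F : Set Ω} (h : E ⊆ F) : pr p E ≤ pr p F :=
  sum_le_sum fun ω _ => Set.indicator_le_indicator_of_subset h hp ω

theorem pr_mem_eq_sum_prEq (p : Ω → ℝ) (X : Ω → 𝒳) (s : Finset 𝒳) :
    pr p {ω | X ω ∈ s} = ∑ x ∈ s, prEq p X x := by
  classical
  simp only [prEq, pr]
  rw [sum_comm]
  simp [Set.indicator_apply]

theorem pr_mem_eq_sum_sum_pr (p : Ω → ℝ) [Fintype 𝒴] (X : Ω → 𝒳) (Y : Ω → 𝒴) (t : 𝒴 → Finset 𝒳) :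
    pr p {ω | X ω ∈ t (Y ω)} = ∑ y, ∑ x ∈ t y, pr p {ω | X ω = x ∧ Y ω = y} := by
  have pairs := pr_mem_eq_sum_prEq p (fun ω => (⟨Y ω, X ω⟩ : Σ _ : 𝒴, 𝒳)) (univ.sigma t)
  rw [sum_sigma] at pairs
  simpa [prEq, and_comm] using pairs

variable [Fintype 𝒳] [Nonempty 𝒳]

theorem pr_and_le_prEq_mul_sup'_condProb (hp : ∀ ω, 0 ≤ p ω) (X : Ω → 𝒳) (Y : Ω → 𝒴)
    (x : 𝒳) (y : 𝒴) :
    pr p {ω | X ω = x ∧ Y ω = y} ≤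
      prEq p Y y * univ.sup' univ_nonempty fun x => condProb p X x Y y := by
  by_cases hy : prEq p Y y = 0
  · rw [hy, zero_mul, ← hy]
    exact pr_mono hp fun ω hω => hω.2
  · calc pr p {ω | X ω = x ∧ Y ω = y}
        = prEq p Y y * condProb p X x Y y := by rw [condProb, if_neg hy, mul_div_cancel₀ _ hy]
      _ ≤ _ := mul_le_mul_of_nonneg_left (le_sup' (fun x => condProb p X x Y y) (mem_univ x))
          (pr_nonneg hp _)

variable [Fintype 𝒴]

/-- The optimal probability of guessing `X` from an observation of `Y`, so that `H̃∞(X | Y)` is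
`-log₂` of it. -/
noncomputable def guessProb (p : Ω → ℝ) (X : Ω → 𝒳) (Y : Ω → 𝒴) : ℝ :=
  ∑ y, prEq p Y y * univ.sup' univ_nonempty fun x => condProb p X x Y y

theorem pr_mem_le_mul_guessProb (hp : ∀ ω, 0 ≤ p ω) (X : Ω → 𝒳) (Y : Ω → 𝒴)
    {t : 𝒴 → Finset 𝒳} {N : ℕ} (ht : ∀ y, #(t y) ≤ N) :
    pr p {ω | X ω ∈ t (Y ω)} ≤ N * guessProb p X Y := by
  rw [pr_mem_eq_sum_sum_pr, guessProb, mul_sum]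
  refine sum_le_sum fun y _ => ?_
  set m := prEq p Y y * univ.sup' univ_nonempty fun x => condProb p X x Y y
  have joint_le (x : 𝒳) : pr p {ω | X ω = x ∧ Y ω = y} ≤ m :=
    pr_and_le_prEq_mul_sup'_condProb hp X Y x y
  have m_nonneg : 0 ≤ m := (pr_nonneg hp _).trans (joint_le (Classical.arbitrary 𝒳))
  calc ∑ x ∈ t y, pr p {ω | X ω = x ∧ Y ω = y}
      ≤ #(t y) • m := sum_le_card_nsmul _ _ _ fun x _ => joint_le x
    _ = #(t y) * m := nsmul_eq_mul _ _
    _ ≤ N * m := by gcongr; exact ht y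

theorem guessProb_pos (hp : ∀ ω, 0 ≤ p ω) (hsum : 0 < ∑ ω, p ω) (X : Ω → 𝒳) (Y : Ω → 𝒴) :
    0 < guessProb p X Y := by
  have total_le : ∑ ω, p ω ≤ Fintype.card 𝒳 * guessProb p X Y := by
    simpa [pr] using pr_mem_le_mul_guessProb hp X Y (t := fun _ => univ) fun _ => le_rfl
  exact pos_of_mul_pos_right (hsum.trans_le total_le) (Nat.cast_nonneg _)

theorem two_rpow_neg_avgMinEntropy (hp : ∀ ω, 0 ≤ p ω) (hsum : 0 < ∑ ω, p ω)
    (X : Ω → 𝒳) (Y : Ω → 𝒴) :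
    (2 : ℝ) ^ (-avgMinEntropy p X Y) = guessProb p X Y := by
  rw [avgMinEntropy, neg_neg]
  exact rpow_logb two_pos (by norm_num) (guessProb_pos hp hsum X Y)

theorem pr_mem_le_mul_two_rpow_neg_avgMinEntropy (hp : ∀ ω, 0 ≤ p ω) (hsum : 0 < ∑ ω, p ω)
    (X : Ω → 𝒳) (Y : Ω → 𝒴) {t : 𝒴 → Finset 𝒳} {N : ℕ} (ht : ∀ y, #(t y) ≤ N) :
    pr p {ω | X ω ∈ t (Y ω)} ≤ N * (2 : ℝ) ^ (-avgMinEntropy p X Y) := by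
  rw [two_rpow_neg_avgMinEntropy hp hsum]
  exact pr_mem_le_mul_guessProb hp X Y ht

end Probability

theorem stmt_8_general {Ω ι α : Type*} [Fintype Ω] [Fintype ι] [DecidableEq ι]
    [Fintype α] [DecidableEq α] [Nonempty α]
    (p : Ω → ℝ) (hp : ∀ ω, 0 ≤ p ω) (hsum : 0 < ∑ ω, p ω) (S Q : Ω → ι → α) (d : ℕ) :
    pr p {ω | hammingDist (Q ω) (S ω) < d} ≤
      ((∑ k ∈ range d, (Fintype.card ι).choose k * (Fintype.card α - 1) ^ k : ℕ) : ℝ) *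
        (2 : ℝ) ^ (-avgMinEntropy p S Q) := by
  simpa only [mem_filter_univ] using
    pr_mem_le_mul_two_rpow_neg_avgMinEntropy hp hsum S Q
      (t := fun q => {x | hammingDist q x < d}) fun q => (card_filter_hammingDist_lt q d).le

theorem stmt_8 {Ω : Type*} [Fintype Ω] (n : ℕ)
    (p : Ω → ℝ) (hp : ∀ ω, 0 ≤ p ω) (hsum : ∑ ω, p ω = 1)
    (S Q : Ω → (Fin n → Bool)) (dmin : ℕ) (hd0 : 0 < dmin) (hdn : dmin ≤ n) :
    pr p {ω | hammingDist (Q ω) (S ω) < dmin} ≤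
      ((∑ k ∈ Finset.range dmin, n.choose k : ℕ) : ℝ) *
        (2 : ℝ) ^ (-(avgMinEntropy p S Q)) := by
  simpa using stmt_8_general p hp (hsum.symm ▸ one_pos) S Q dmin
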